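/- For the harmonic potentials ψ(y) = α·y² and P(y) = β·y² with α, β > 0, the defect-formation free energy is given explicitly for every A ∈ ℝ and every integer N ≥ 2 by G_N(A) = (1/2)·log((α+β)/α) + α·β·A²/(α+β) − N·α·β²·A²/(N·(α+β) − β)² + (α·β·A²/(α+β))·( 2β/(N·(α+β) − β) + β²/(N·(α+β) − β)² ) + (1/2)·log(1 − β/(N·(α+β))); consequently the thermodynamic limit is G_∞(A) = lim_{N→∞} G_N(A) = α·β·A²/(α+β) + (1/2)·log((α+β)/α), and for every A ∈ ℝ there is a constant C > 0 with |G_N(A) − G_∞(A)| ≤ C/N for all N ≥ 2. -/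

import Mathlib

/-!
Integrating out the site between two harmonic bonds is a Gaussian convolution, under which the
compliances (inverse stiffnesses) add. So a chain with stiffnesses `k_1, …, k_n`, pinned at `0` and
`b`, has partition function
`√(π^(n-1) / (∏ k_i · S)) · exp(-b² / S)` with total compliance `S = ∑ 1 / k_i`.

Since `u_0 = 0`, the defect `β u_1²` merely replaces the stiffness `α` of the first bond by `α + β`.
Subtracting the two free energies gives, with `D = N (α + β) - β`,
`G_N(A) = α β N A² / D + (1/2) log (D / (N α))`.
As `D` differs from `N (α + β)` by the constant `β`, both terms are within `O(1/N)` of their limits.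
-/

noncomputable section

open MeasureTheory Real Filter

/-- Extend interior degrees of freedom `u : ℝ^(n-1)` to the whole chain via the
boundary conditions `u 0 = 0` and `u n = b`. -/
def bc (n : ℕ) (b : ℝ) (u : Fin (n - 1) → ℝ) : ℕ → ℝ := fun i =>
  if h : 0 < i ∧ i < n then u ⟨i - 1, by omega⟩ else if i = 0 then 0 else b

/-- The chain energy `∑_{i=1}^n φ_i (u_i - u_{i-1})` with boundary conditions
`u 0 = 0`, `u n = b`. -/
def chainE (φ : ℕ → ℝ → ℝ) (n : ℕ) (b : ℝ) (u : Fin (n - 1) → ℝ) : ℝ :=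
  ∑ i ∈ Finset.range n, φ (i + 1) (bc n b u (i + 1) - bc n b u i)

/-- The free energy `-log ∫_{ℝ^{N-1}} exp(-∑ φ_i(u_i-u_{i-1}) - defect(u₁)) du`. -/
def freeEnergy (φ : ℕ → ℝ → ℝ) (defect : ℝ → ℝ) (N : ℕ) (A : ℝ) : ℝ :=
  - Real.log (∫ u : Fin (N - 1) → ℝ,
      Real.exp (-(chainE φ N (N * A) u) - defect (bc N (N * A) u 1)))

lemma abs_log_sub_log_le {m x y : ℝ} (hm : 0 < m) (hx : m ≤ x) (hy : m ≤ y) :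
    |log x - log y| ≤ |x - y| / m := by
  wlog hxy : y ≤ x generalizing x y
  · rw [abs_sub_comm, abs_sub_comm x]
    exact this hy hx (le_of_not_ge hxy)
  have hy0 : 0 < y := hm.trans_le hy
  have hx0 : 0 < x := hm.trans_le hx
  rw [abs_of_nonneg (sub_nonneg.2 (log_le_log hy0 hxy)), abs_of_nonneg (sub_nonneg.2 hxy)]
  calc log x - log y = log (x / y) := (log_div hx0.ne' hy0.ne').symm
    _ ≤ x / y - 1 := log_le_sub_one_of_pos (by positivity)
    _ = (x - y) / y := by field_simp
    _ ≤ (x - y) / m := by gcongr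

lemma lintegral_pi_insertNth {n : ℕ} {E : Fin (n + 1) → Type*} [∀ i, MeasurableSpace (E i)]
    (μ : ∀ i, Measure (E i)) [∀ i, SigmaFinite (μ i)] (i : Fin (n + 1))
    {f : (∀ j, E j) → ENNReal} (hf : Measurable f) :
    ∫⁻ u, f u ∂Measure.pi μ =
      ∫⁻ y, ∫⁻ v, f (i.insertNth y v) ∂Measure.pi (fun j => μ (i.succAbove j)) ∂μ i := by
  have e := (measurePreserving_piFinSuccAbove μ i).symm
  rw [← e.lintegral_comp hf]
  exact lintegral_prod _ (hf.comp e.measurable).aemeasurable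

lemma lintegral_exp_neg_sq_div_mul_exp_neg_sq_div {s t : ℝ} (hs : 0 < s) (ht : 0 < t) (b : ℝ) :
    ∫⁻ y, ENNReal.ofReal (exp (-(y ^ 2 / s))) * ENNReal.ofReal (exp (-((b - y) ^ 2 / t))) =
      ENNReal.ofReal (√(π * (s * t / (s + t))) * exp (-(b ^ 2 / (s + t)))) := by
  have hr : 0 < (s + t) / (s * t) := by positivity
  have complete_square (y : ℝ) :
      ENNReal.ofReal (exp (-(y ^ 2 / s))) * ENNReal.ofReal (exp (-((b - y) ^ 2 / t))) =
        ENNReal.ofReal (exp (-((s + t) / (s * t)) * (y - s * b / (s + t)) ^ 2) *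
          exp (-(b ^ 2 / (s + t)))) := by
    rw [← ENNReal.ofReal_mul (exp_pos _).le, ← exp_add, ← exp_add]
    congr 2
    field_simp
    ring
  simp_rw [complete_square]
  rw [← ofReal_integral_eq_lintegral_ofReal
      (((integrable_exp_neg_mul_sq hr).comp_sub_right _).mul_const _)
      (.of_forall fun _ => by positivity),
    integral_mul_const, integral_sub_right_eq_self fun y : ℝ => exp (-((s + t) / (s * t)) * y ^ 2),
    integral_gaussian, div_div_eq_mul_div, mul_div_assoc]

section Chain

variable (φ : ℕ → ℝ → ℝ) (n : ℕ) (b : ℝ)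

lemma bc_zero (u : Fin (n - 1) → ℝ) : bc n b u 0 = 0 := by
  simp [bc]

lemma bc_self (hn : n ≠ 0) (u : Fin (n - 1) → ℝ) : bc n b u n = b := by
  simp [bc, hn]

lemma bc_snoc (v : Fin n → ℝ) (y : ℝ) {i : ℕ} (hi : i ≤ n + 1) :
    bc (n + 2) b (Fin.snoc (α := fun _ => ℝ) v y) i = bc (n + 1) y v i := by
  rcases i with _ | j
  · simp only [bc_zero]
  obtain hj | rfl : j < n ∨ j = n := by omega
  · simp [bc, Fin.snoc, hj, hj.trans (Nat.lt_succ_self n)]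
  · simp [bc, Fin.snoc]

lemma chainE_snoc (v : Fin n → ℝ) (y : ℝ) :
    chainE φ (n + 2) b (Fin.snoc (α := fun _ => ℝ) v y) =
      chainE φ (n + 1) y v + φ (n + 2) (b - y) := by
  unfold chainE
  rw [Finset.sum_range_succ]
  congr 1
  · refine Finset.sum_congr rfl fun i hi => ?_
    rw [Finset.mem_range] at hi
    rw [bc_snoc n b v y (by omega), bc_snoc n b v y (by omega)]
  · rw [bc_self _ b (by omega), bc_snoc n b v y le_rfl, bc_self _ y (by omega)]

lemma measurable_bc (i : ℕ) : Measurable fun u => bc n b u i := by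
  unfold bc
  split_ifs <;> fun_prop

variable {φ} in
lemma measurable_chainE (hφ : ∀ i, Measurable (φ i)) : Measurable (chainE φ n b) :=
  Finset.measurable_sum _ fun i _ =>
    (hφ (i + 1)).comp ((measurable_bc n b (i + 1)).sub (measurable_bc n b i))

end Chain

/-- The partition function `∫ exp(-∑ φ_i(u_i - u_{i-1})) du` of the chain pinned at `u 0 = 0` and
`u n = b`. It takes values in `ℝ≥0∞`, so that Tonelli's theorem needs no integrability. -/
def partitionFunction (φ : ℕ → ℝ → ℝ) (n : ℕ) (b : ℝ) : ENNReal :=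
  ∫⁻ u : Fin (n - 1) → ℝ, ENNReal.ofReal (exp (-chainE φ n b u))

lemma partitionFunction_one (φ : ℕ → ℝ → ℝ) (b : ℝ) :
    partitionFunction φ 1 b = ENNReal.ofReal (exp (-φ 1 b)) := by
  have hE (u : Fin (1 - 1) → ℝ) : chainE φ 1 b u = φ 1 b := by
    simp [chainE, bc]
  simp only [partitionFunction, hE, lintegral_const]
  simp [volume_pi]

lemma partitionFunction_add_two {φ : ℕ → ℝ → ℝ} (hφ : ∀ i, Measurable (φ i)) (n : ℕ) (b : ℝ) :
    partitionFunction φ (n + 2) b =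
      ∫⁻ y, partitionFunction φ (n + 1) y * ENNReal.ofReal (exp (-φ (n + 2) (b - y))) := by
  have hE : Measurable fun u => ENNReal.ofReal (exp (-chainE φ (n + 2) b u)) :=
    (measurable_chainE (n + 2) b hφ).neg.exp.ennreal_ofReal
  refine (lintegral_pi_insertNth (fun _ => volume) (Fin.last n) hE).trans
    (lintegral_congr fun y => ?_)
  unfold partitionFunction
  rw [← lintegral_mul_const' _ _ ENNReal.ofReal_ne_top]
  refine lintegral_congr fun v => ?_
  rw [Fin.insertNth_last', chainE_snoc, neg_add, exp_add, ENNReal.ofReal_mul (exp_pos _).le]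

lemma freeEnergy_eq_neg_log_partitionFunction {φ : ℕ → ℝ → ℝ} (hφ : ∀ i, Measurable (φ i))
    (N : ℕ) (A : ℝ) :
    freeEnergy φ (fun _ => 0) N A = -log (partitionFunction φ N (N * A)).toReal := by
  have hE : Measurable fun u => exp (-chainE φ N (N * A) u) :=
    (measurable_chainE N (N * A) hφ).neg.exp
  simp only [freeEnergy, partitionFunction, sub_zero]
  rw [integral_eq_lintegral_of_nonneg_ae (.of_forall fun _ => (exp_pos _).le)
    hE.aestronglyMeasurable]

lemma freeEnergy_eq_freeEnergy_update (φ : ℕ → ℝ → ℝ) (P : ℝ → ℝ) {N : ℕ} (hN : N ≠ 0) (A : ℝ) :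
    freeEnergy φ P N A =
      freeEnergy (Function.update φ 1 fun y => φ 1 y + P y) (fun _ => 0) N A := by
  obtain ⟨n, rfl⟩ := Nat.exists_eq_succ_of_ne_zero hN
  have hE (b : ℝ) (u : Fin (n + 1 - 1) → ℝ) :
      chainE (Function.update φ 1 fun y => φ 1 y + P y) (n + 1) b u =
        chainE φ (n + 1) b u + P (bc (n + 1) b u 1) := by
    simp [chainE, Finset.sum_range_succ', bc_zero, add_assoc]
  simp only [freeEnergy, Nat.succ_eq_add_one, hE, neg_add, sub_eq_add_neg, neg_zero, add_zero]

section Harmonic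

/-- The total compliance `∑_{i=1}^n 1/k_i` of `n` bonds of stiffnesses `k 1, …, k n` in series. -/
def compliance (k : ℕ → ℝ) (n : ℕ) : ℝ :=
  ∑ i ∈ Finset.range n, (k (i + 1))⁻¹

variable {k : ℕ → ℝ}

lemma compliance_pos (hk : ∀ i, 0 < k i) {n : ℕ} (hn : n ≠ 0) : 0 < compliance k n :=
  Finset.sum_pos (fun i _ => inv_pos.2 (hk (i + 1))) (Finset.nonempty_range_iff.2 hn)

lemma partitionFunction_harmonic (hk : ∀ i, 0 < k i) (n : ℕ) (b : ℝ) :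
    partitionFunction (fun i y => k i * y ^ 2) (n + 1) b =
      ENNReal.ofReal
        (√(π ^ n / ((∏ i ∈ Finset.range (n + 1), k (i + 1)) * compliance k (n + 1))) *
          exp (-(b ^ 2 / compliance k (n + 1)))) := by
  induction n generalizing b with
  | zero =>
    simp [partitionFunction_one, compliance, (hk 1).ne', mul_comm]
  | succ n ih =>
    set p := ∏ i ∈ Finset.range (n + 1), k (i + 1) with hp
    set s := compliance k (n + 1)
    have hp0 : 0 < p := Finset.prod_pos fun i _ => hk (i + 1)
    have hs0 : 0 < s := compliance_pos hk n.succ_ne_zero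
    have hk0 : 0 < k (n + 2) := hk (n + 2)
    have hbond (y : ℝ) : k (n + 2) * (b - y) ^ 2 = (b - y) ^ 2 / (k (n + 2))⁻¹ := by
      rw [div_inv_eq_mul, mul_comm]
    have hsucc : compliance k (n + 1 + 1) = s + (k (n + 2))⁻¹ := Finset.sum_range_succ _ _
    rw [partitionFunction_add_two fun i => by fun_prop]
    simp_rw [ih, hbond, ENNReal.ofReal_mul (sqrt_nonneg _), mul_assoc]
    rw [lintegral_const_mul' _ _ ENNReal.ofReal_ne_top,
      lintegral_exp_neg_sq_div_mul_exp_neg_sq_div hs0 (inv_pos.2 hk0),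
      ENNReal.ofReal_mul (sqrt_nonneg _), ← mul_assoc, ← ENNReal.ofReal_mul (sqrt_nonneg _),
      ← sqrt_mul (by positivity), hsucc, Finset.prod_range_succ, ← hp]
    congr 3
    field_simp
    exact (pow_succ π n).symm

lemma freeEnergy_harmonic (hk : ∀ i, 0 < k i) (n : ℕ) (A : ℝ) :
    freeEnergy (fun i y => k i * y ^ 2) (fun _ => 0) (n + 1) A =
      ((n + 1) * A) ^ 2 / compliance k (n + 1) +
        (1 / 2) * (log ((∏ i ∈ Finset.range (n + 1), k (i + 1)) * compliance k (n + 1)) -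
          n * log π) := by
  have hp : 0 < ∏ i ∈ Finset.range (n + 1), k (i + 1) := Finset.prod_pos fun i _ => hk (i + 1)
  have hs : 0 < compliance k (n + 1) := compliance_pos hk n.succ_ne_zero
  rw [freeEnergy_eq_neg_log_partitionFunction fun i => by fun_prop, partitionFunction_harmonic hk,
    ENNReal.toReal_ofReal (by positivity), log_mul (by positivity) (exp_pos _).ne', log_exp,
    log_sqrt (by positivity), log_div (by positivity) (by positivity), log_pow]
  push_cast
  ring

end Harmonic

section Defect

/-- The defect-formation free energy `G_N(A) = F_N^P(A) - F_N(A)` of a homogeneous chain with bond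
potential `ψ` and defect potential `P`. -/
def defectFormationEnergy (ψ P : ℝ → ℝ) (N : ℕ) (A : ℝ) : ℝ :=
  freeEnergy (fun _ => ψ) P N A - freeEnergy (fun _ => ψ) (fun _ => 0) N A

/-- The stiffnesses of a harmonic chain whose first bond carries a harmonic defect: `α + β` for the
first bond and `α` for all others. -/
def defectStiffness (α β : ℝ) : ℕ → ℝ :=
  Function.update (fun _ => α) 1 (α + β)

variable (α β : ℝ)

lemma compliance_const (n : ℕ) : compliance (fun _ => α) n = n / α := by
  simp [compliance, div_eq_mul_inv]

lemma compliance_defectStiffness (n : ℕ) :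
    compliance (defectStiffness α β) (n + 1) = n / α + (α + β)⁻¹ := by
  simp [compliance, defectStiffness, Finset.sum_range_succ', div_eq_mul_inv]

lemma prod_defectStiffness (n : ℕ) :
    ∏ i ∈ Finset.range (n + 1), defectStiffness α β (i + 1) = α ^ n * (α + β) := by
  simp [defectStiffness, Finset.prod_range_succ']

lemma freeEnergy_harmonic_defect {N : ℕ} (hN : N ≠ 0) (A : ℝ) :
    freeEnergy (fun _ y => α * y ^ 2) (fun y => β * y ^ 2) N A =
      freeEnergy (fun i y => defectStiffness α β i * y ^ 2) (fun _ => 0) N A := by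
  rw [freeEnergy_eq_freeEnergy_update _ _ hN]
  congr 1
  funext i y
  obtain rfl | hi := eq_or_ne i 1
  · simp [defectStiffness, add_mul]
  · simp [defectStiffness, hi]

variable {α β}

lemma min_mul_le_mul_add_sub {N : ℕ} (hN : 1 ≤ N) :
    min α (α + β) * N ≤ N * (α + β) - β := by
  obtain ⟨n, rfl⟩ := Nat.exists_eq_add_of_le' hN
  have hn : min α (α + β) * n ≤ (α + β) * n := by
    gcongr
    exact min_le_right _ _
  have h1 : min α (α + β) ≤ α := min_le_left _ _
  push_cast
  linarith

lemma defectStiffness_pos (hα : 0 < α) (hαβ : 0 < α + β) (i : ℕ) : 0 < defectStiffness α β i := by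
  unfold defectStiffness
  obtain rfl | hi := eq_or_ne i 1
  · simpa
  · simpa [hi]

lemma mul_add_sub_pos (hα : 0 < α) (hαβ : 0 < α + β) {N : ℕ} (hN : 1 ≤ N) :
    0 < N * (α + β) - β :=
  (mul_pos (lt_min hα hαβ) (by positivity)).trans_le (min_mul_le_mul_add_sub hN)

lemma defectFormationEnergy_harmonic (hα : 0 < α) (hαβ : 0 < α + β)
    {N : ℕ} (hN : 1 ≤ N) (A : ℝ) :
    defectFormationEnergy (fun y => α * y ^ 2) (fun y => β * y ^ 2) N A =
      α * β * N * A ^ 2 / (N * (α + β) - β) +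
        (1 / 2) * (log (N * (α + β) - β) - log (N * α)) := by
  have hD := mul_add_sub_pos hα hαβ hN
  obtain ⟨n, rfl⟩ := Nat.exists_eq_add_of_le' hN
  push_cast at hD ⊢
  set D := ((n : ℝ) + 1) * (α + β) - β with hDdef
  have hcompliance : n / α + (α + β)⁻¹ = D / (α * (α + β)) := by
    field_simp
    ring
  have hlog_defect :
      log (α ^ n * (α + β) * (D / (α * (α + β)))) = log (α ^ n / α) + log D := by
    rw [← log_mul (by positivity) hD.ne']
    congr 1
    field_simp
  have hlog : log (α ^ (n + 1) * ((n + 1) / α)) = log (α ^ n / α) + log ((n + 1) * α) := by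
    rw [← log_mul (by positivity) (by positivity), pow_succ]
    congr 1
    field_simp
  rw [defectFormationEnergy, freeEnergy_harmonic_defect α β n.succ_ne_zero,
    freeEnergy_harmonic (defectStiffness_pos hα hαβ), freeEnergy_harmonic fun _ => hα,
    compliance_defectStiffness, prod_defectStiffness, compliance_const, Finset.prod_const,
    Finset.card_range, hcompliance, Nat.cast_succ, hlog_defect, hlog]
  field_simp
  rw [hDdef]
  ring

lemma defectFormationEnergy_harmonic_sub_limit (hα : 0 < α) (hαβ : 0 < α + β)
    {N : ℕ} (hN : 1 ≤ N) (A : ℝ) :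
    defectFormationEnergy (fun y => α * y ^ 2) (fun y => β * y ^ 2) N A -
        (α * β * A ^ 2 / (α + β) + 1 / 2 * log ((α + β) / α)) =
      α * β ^ 2 * A ^ 2 / (α + β) / (N * (α + β) - β) +
        1 / 2 * (log (N * (α + β) - β) - log (N * (α + β))) := by
  have hD := mul_add_sub_pos hα hαβ hN
  have hN0 : (0 : ℝ) < N := by positivity
  rw [defectFormationEnergy_harmonic hα hαβ hN, log_div hαβ.ne' hα.ne', log_mul hN0.ne' hα.ne',
    log_mul hN0.ne' hαβ.ne']
  field_simp
  ring

lemma abs_defectFormationEnergy_harmonic_sub_limit_le (hα : 0 < α) (hαβ : 0 < α + β)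
    {N : ℕ} (hN : 1 ≤ N) (A : ℝ) :
    |defectFormationEnergy (fun y => α * y ^ 2) (fun y => β * y ^ 2) N A -
        (α * β * A ^ 2 / (α + β) + 1 / 2 * log ((α + β) / α))| ≤
      (α * β ^ 2 * A ^ 2 / (α + β) + 1 / 2 * |β|) / min α (α + β) / N := by
  have hm : 0 < min α (α + β) := lt_min hα hαβ
  have hmN : 0 < min α (α + β) * N := by positivity
  have hD : 0 < N * (α + β) - β := mul_add_sub_pos hα hαβ hN
  have hDle : min α (α + β) * N ≤ N * (α + β) - β := min_mul_le_mul_add_sub hN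
  have hNle : min α (α + β) * N ≤ N * (α + β) := by
    rw [mul_comm]
    gcongr
    exact min_le_right _ _
  have henergy : |α * β ^ 2 * A ^ 2 / (α + β) / (N * (α + β) - β)| ≤
      α * β ^ 2 * A ^ 2 / (α + β) / (min α (α + β) * N) := by
    rw [abs_of_nonneg (by positivity)]
    gcongr
  have hentropy : |log (N * (α + β) - β) - log (N * (α + β))| ≤ |β| / (min α (α + β) * N) := by
    simpa using abs_log_sub_log_le hmN hDle hNle
  rw [defectFormationEnergy_harmonic_sub_limit hα hαβ hN]
  calc _ ≤ |α * β ^ 2 * A ^ 2 / (α + β) / (N * (α + β) - β)| +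
        |1 / 2 * (log (N * (α + β) - β) - log (N * (α + β)))| := abs_add_le _ _
    _ ≤ α * β ^ 2 * A ^ 2 / (α + β) / (min α (α + β) * N) +
        1 / 2 * (|β| / (min α (α + β) * N)) := by
      rw [abs_mul, abs_of_pos (by norm_num : (0 : ℝ) < 1 / 2)]
      gcongr
    _ = _ := by field_simp

lemma defectFormationEnergy_harmonic_expansion (hα : 0 < α) (hαβ : 0 < α + β)
    {N : ℕ} (hN : 1 ≤ N) (A : ℝ) :
    defectFormationEnergy (fun y => α * y ^ 2) (fun y => β * y ^ 2) N A =
      1 / 2 * log ((α + β) / α) + α * β * A ^ 2 / (α + β) -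
        N * α * β ^ 2 * A ^ 2 / (N * (α + β) - β) ^ 2 +
        α * β * A ^ 2 / (α + β) *
          (2 * β / (N * (α + β) - β) + β ^ 2 / (N * (α + β) - β) ^ 2) +
        1 / 2 * log (1 - β / (N * (α + β))) := by
  have hD := mul_add_sub_pos hα hαβ hN
  have hN0 : (0 : ℝ) < N := by positivity
  have hlog : log (1 - β / (N * (α + β))) = log (N * (α + β) - β) - log (N * (α + β)) := by
    rw [one_sub_div (by positivity), log_div hD.ne' (by positivity)]
  have henergy : α * β ^ 2 * A ^ 2 / (α + β) / (N * (α + β) - β) =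
      α * β * A ^ 2 / (α + β) *
          (2 * β / (N * (α + β) - β) + β ^ 2 / (N * (α + β) - β) ^ 2) -
        N * α * β ^ 2 * A ^ 2 / (N * (α + β) - β) ^ 2 := by
    generalize hDdef : N * (α + β) - β = D at hD ⊢
    have hND : N = (D + β) / (α + β) := by
      field_simp
      linarith
    rw [hND]
    field_simp
    ring
  rw [hlog]
  linarith [defectFormationEnergy_harmonic_sub_limit hα hαβ hN A]

end Defect

theorem harmonic_defect_formation_free_energy_general
    {α β : ℝ} (hα : 0 < α) (hαβ : 0 < α + β) (A : ℝ) :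
    (∀ N : ℕ, 1 ≤ N →
      defectFormationEnergy (fun y => α * y ^ 2) (fun y => β * y ^ 2) N A =
        1 / 2 * log ((α + β) / α) + α * β * A ^ 2 / (α + β) -
          N * α * β ^ 2 * A ^ 2 / (N * (α + β) - β) ^ 2 +
          α * β * A ^ 2 / (α + β) *
            (2 * β / (N * (α + β) - β) + β ^ 2 / (N * (α + β) - β) ^ 2) +
          1 / 2 * log (1 - β / (N * (α + β)))) ∧
    Tendsto (defectFormationEnergy (fun y => α * y ^ 2) (fun y => β * y ^ 2) · A) atTop
      (nhds (α * β * A ^ 2 / (α + β) + 1 / 2 * log ((α + β) / α))) ∧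
    ∃ C > (0 : ℝ), ∀ N : ℕ, 1 ≤ N →
      |defectFormationEnergy (fun y => α * y ^ 2) (fun y => β * y ^ 2) N A -
        (α * β * A ^ 2 / (α + β) + 1 / 2 * log ((α + β) / α))| ≤ C / N := by
  set C := (α * β ^ 2 * A ^ 2 / (α + β) + 1 / 2 * |β|) / min α (α + β)
  have hm : 0 < min α (α + β) := lt_min hα hαβ
  have hC : 0 ≤ C := by positivity
  refine ⟨fun N hN => defectFormationEnergy_harmonic_expansion hα hαβ hN A, ?_,
    C + 1, by positivity, fun N hN => ?_⟩
  · refine tendsto_iff_norm_sub_tendsto_zero.2 (squeeze_zero' (.of_forall fun _ => norm_nonneg _)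
      ?_ (tendsto_const_div_atTop_nhds_zero_nat C))
    filter_upwards [eventually_ge_atTop 1] with N hN
    exact abs_defectFormationEnergy_harmonic_sub_limit_le hα hαβ hN A
  · refine (abs_defectFormationEnergy_harmonic_sub_limit_le hα hαβ hN A).trans ?_
    gcongr
    exact le_add_of_nonneg_right zero_le_one

/-- explicit defect-formation free energy for harmonic potentials
`ψ(y) = α y²`, `P(y) = β y²`, its thermodynamic limit, and the `1/N` rate. -/
theorem harmonic_defect_formation_free_energy
    (α β : ℝ) (hα : 0 < α) (hβ : 0 < β) (A : ℝ) :
    (∀ N : ℕ, 2 ≤ N →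
      freeEnergy (fun _ y => α * y ^ 2) (fun y => β * y ^ 2) N A -
        freeEnergy (fun _ y => α * y ^ 2) (fun _ => 0) N A =
      (1 / 2 : ℝ) * Real.log ((α + β) / α) + α * β * A ^ 2 / (α + β) -
        (N : ℝ) * α * β ^ 2 * A ^ 2 / ((N : ℝ) * (α + β) - β) ^ 2 +
        (α * β * A ^ 2 / (α + β)) *
          (2 * β / ((N : ℝ) * (α + β) - β) + β ^ 2 / ((N : ℝ) * (α + β) - β) ^ 2) +
        (1 / 2 : ℝ) * Real.log (1 - β / ((N : ℝ) * (α + β)))) ∧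
    Tendsto
      (fun N : ℕ =>
        freeEnergy (fun _ y => α * y ^ 2) (fun y => β * y ^ 2) N A -
          freeEnergy (fun _ y => α * y ^ 2) (fun _ => 0) N A)
      atTop
      (nhds (α * β * A ^ 2 / (α + β) + (1 / 2 : ℝ) * Real.log ((α + β) / α))) ∧
    ∃ C > 0, ∀ N : ℕ, 2 ≤ N →
      |(freeEnergy (fun _ y => α * y ^ 2) (fun y => β * y ^ 2) N A -
          freeEnergy (fun _ y => α * y ^ 2) (fun _ => 0) N A) -
        (α * β * A ^ 2 / (α + β) + (1 / 2 : ℝ) * Real.log ((α + β) / α))| ≤ C / N := by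
  obtain ⟨hformula, hlimit, C, hC, hrate⟩ :=
    harmonic_defect_formation_free_energy_general hα (add_pos hα hβ) A
  exact ⟨fun N hN => hformula N (by lia), hlimit, C, hC, fun N hN => hrate N (by lia)⟩
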